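/- arXiv:1503.04701 — 4 statements merged into one kernel-verified Lean document; each statement's English description precedes it below -/
import Mathlib

section
/- Let n be a positive integer, let P be a real symmetric positive semidefinite n×n matrix, let J be a real symmetric positive definite n×n matrix, and let N be any real n×n matrix. If for all vectors u, ξ ∈ ℝⁿ one has (uᵀ N ξ)² ≤ (uᵀ P u)(ξᵀ J ξ), then P − N J⁻¹ Nᵀ is positive semidefinite (i.e. P ⪰ N J⁻¹ Nᵀ in the Loewner order). -/
open Matrix

/-- If `P ⪰ 0` is symmetric PSD, `J` is symmetric positive definite, and for all
vectors `u, ξ` one has `(uᵀ N ξ)² ≤ (uᵀ P u)(ξᵀ J ξ)`, then `P − N J⁻¹ Nᵀ ⪰ 0`. -/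
theorem cauchy_schwarz_matrix_bound (n : ℕ) (hn : 0 < n)
    (P J N : Matrix (Fin n) (Fin n) ℝ)
    (hP : P.PosSemidef) (hJ : J.PosDef)
    (h : ∀ u ξ : Fin n → ℝ, (u ⬝ᵥ N *ᵥ ξ) ^ 2 ≤ (u ⬝ᵥ P *ᵥ u) * (ξ ⬝ᵥ J *ᵥ ξ)) :
    (P - N * J⁻¹ * Nᵀ).PosSemidef := by
  have hU : IsUnit J.det := (Matrix.isUnit_iff_isUnit_det J).1 hJ.isUnit
  refine .of_dotProduct_mulVec_nonneg ?_ (fun u => ?_)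
  · refine hP.1.sub ?_
    have := isHermitian_mul_mul_conjTranspose N hJ.1.inv
    simpa [conjTranspose_eq_transpose_of_trivial] using this
  · have hp : 0 ≤ u ⬝ᵥ P *ᵥ u := by simpa using hP.dotProduct_mulVec_nonneg u
    have hu := h u (J⁻¹ *ᵥ (Nᵀ *ᵥ u))
    have hq : 0 ≤ (J⁻¹ *ᵥ (Nᵀ *ᵥ u)) ⬝ᵥ J *ᵥ (J⁻¹ *ᵥ (Nᵀ *ᵥ u)) := by
      simpa using hJ.posSemidef.dotProduct_mulVec_nonneg (J⁻¹ *ᵥ (Nᵀ *ᵥ u))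
    have e : (J⁻¹ *ᵥ (Nᵀ *ᵥ u)) ⬝ᵥ J *ᵥ (J⁻¹ *ᵥ (Nᵀ *ᵥ u))
        = u ⬝ᵥ N *ᵥ (J⁻¹ *ᵥ (Nᵀ *ᵥ u)) := by
      rw [mulVec_mulVec _ J, mul_nonsing_inv _ hU, one_mulVec, dotProduct_comm,
        mulVec_transpose N u, ← dotProduct_mulVec]
    have g : star u ⬝ᵥ (P - N * J⁻¹ * Nᵀ) *ᵥ u
        = u ⬝ᵥ P *ᵥ u - u ⬝ᵥ N *ᵥ (J⁻¹ *ᵥ (Nᵀ *ᵥ u)) := by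
      simp only [star_trivial, sub_mulVec, dotProduct_sub, mulVec_mulVec, Matrix.mul_assoc]
    rw [e] at hu hq
    rw [g]
    by_contra hc
    nlinarith
end

section
/- Let ω : ℝ → ℝ³ be any function and let R, R̂ : ℝ → M₃(ℝ) be differentiable functions both satisfying the same kinematic equation: R'(t) = R(t) (ω(t))ₓ and R̂'(t) = R̂(t) (ω(t))ₓ for all t. Then the right-invariant error t ↦ R̂(t) R(t)ᵀ is constant on ℝ. -/
open Matrix

attribute [local instance] Matrix.frobeniusNormedAddCommGroup Matrix.frobeniusNormedSpace

/-- The cross-product (hat) matrix of `a ∈ ℝ³`: `(a)ₓ u = a × u` for all `u`. -/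
noncomputable def hat (a : Fin 3 → ℝ) : Matrix (Fin 3) (Fin 3) ℝ :=
  !![0, -a 2, a 1; a 2, 0, -a 0; -a 1, a 0, 0]

/-- If `R` and `R̂` both satisfy the same kinematic equation `M' = M (ω(t))ₓ`,
then the right-invariant error `t ↦ R̂(t) R(t)ᵀ` is constant. -/
theorem right_invariant_error_constant (ω : ℝ → Fin 3 → ℝ)
    (R Rhat : ℝ → Matrix (Fin 3) (Fin 3) ℝ)
    (hR : ∀ t, HasDerivAt R (R t * hat (ω t)) t)
    (hRhat : ∀ t, HasDerivAt Rhat (Rhat t * hat (ω t)) t) :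
    ∀ s t : ℝ, Rhat s * (R s)ᵀ = Rhat t * (R t)ᵀ := by
  have entry : ∀ (M : ℝ → Matrix (Fin 3) (Fin 3) ℝ) (N : Matrix (Fin 3) (Fin 3) ℝ) (t : ℝ)
      (_ : HasDerivAt M N t) (i j : Fin 3), HasDerivAt (fun t => M t i j) (N i j) t := by
    intro M N t h i j
    exact (LinearMap.toContinuousLinearMap
      (Matrix.entryLinearMap ℝ ℝ i j)).hasFDerivAt.comp_hasDerivAt t h
  intro s t
  ext i j
  have key : ∀ t, HasDerivAt (fun t => (Rhat t * (R t)ᵀ) i j) 0 t := by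
    intro t
    have h := HasDerivAt.fun_sum (u := Finset.univ) (fun k (_ : k ∈ Finset.univ) =>
      (entry Rhat _ t (hRhat t) i k).mul (entry R _ t (hR t) j k))
    have e : ∑ k, ((Rhat t * hat (ω t)) i k * R t j k
        + Rhat t i k * (R t * hat (ω t)) j k) = 0 := by
      simp [Matrix.mul_apply, Fin.sum_univ_three, hat]
      ring
    have h2 := h.congr_deriv e
    exact h2
  exact is_const_of_deriv_eq_zero (fun t => (key t).differentiableAt)
    (fun t => (key t).deriv) s t
end

section
/- Let P be a real symmetric positive definite n×n matrix, N a real symmetric positive definite m×m matrix, and H a real m×n matrix. Define the Kalman gain K = P Hᵀ (H P Hᵀ + N)⁻¹. Then the matrix (I − K H) P is invertible and ((I − K H) P)⁻¹ = P⁻¹ + Hᵀ N⁻¹ H. -/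
open Matrix

/-- Information form of the Kalman covariance update: with
`K = P Hᵀ (H P Hᵀ + N)⁻¹` (`P`, `N` symmetric positive definite), the matrix `(I − K H) P` is
invertible with inverse `P⁻¹ + Hᵀ N⁻¹ H`. -/
theorem kalman_information_form (n m : ℕ)
    (P : Matrix (Fin n) (Fin n) ℝ) (hP : P.PosDef)
    (N : Matrix (Fin m) (Fin m) ℝ) (hN : N.PosDef)
    (H : Matrix (Fin m) (Fin n) ℝ)
    (K : Matrix (Fin n) (Fin m) ℝ) (hK : K = P * Hᵀ * (H * P * Hᵀ + N)⁻¹) :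
    IsUnit ((1 - K * H) * P) ∧ ((1 - K * H) * P)⁻¹ = P⁻¹ + Hᵀ * N⁻¹ * H := by
  have hS : (H * P * Hᵀ + N).PosDef := by
    have h := hP.posSemidef.mul_mul_conjTranspose_same H
    rw [conjTranspose_eq_transpose_of_trivial] at h
    exact hN.posSemidef_add h
  have hSd := (isUnit_iff_isUnit_det _).1 hS.isUnit
  have hNd := (isUnit_iff_isUnit_det _).1 hN.isUnit
  have hPd := (isUnit_iff_isUnit_det _).1 hP.isUnit
  have hKS : K * (H * P * Hᵀ + N) = P * Hᵀ := by
    rw [hK, nonsing_inv_mul_cancel_right _ _ hSd]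
  have hKH : K * (H * P * Hᵀ) = P * Hᵀ - K * N := by
    rw [← hKS, Matrix.mul_add, add_sub_cancel_right]
  have key : ((1 - K * H) * P) * (P⁻¹ + Hᵀ * N⁻¹ * H) = 1 := by
    have e : ((1 - K * H) * P) * (Hᵀ * N⁻¹ * H)
        = (P * Hᵀ - K * (H * P * Hᵀ)) * N⁻¹ * H := by
      simp only [Matrix.sub_mul, Matrix.one_mul, Matrix.mul_assoc]
    rw [Matrix.mul_add, mul_nonsing_inv_cancel_right _ _ hPd, e, hKH, sub_sub_cancel,
      mul_nonsing_inv_cancel_right _ _ hNd, sub_add_cancel]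
  exact ⟨IsUnit.of_mul_eq_one _ key, inv_eq_right_inv key⟩
end

section
/- Let m, n ≥ 1, and for each k ≥ 1 let Hₖ be a real m×n matrix and Nₖ a real symmetric positive definite m×m matrix; set Aₖ = Hₖᵀ Nₖ⁻¹ Hₖ and assume A₁ is positive definite. Define a sequence of n×n matrices by P₁ = A₁⁻¹ and, for k ≥ 1, Pₖ₊₁ = (I − Kₖ₊₁ Hₖ₊₁) Pₖ where Kₖ₊₁ = Pₖ Hₖ₊₁ᵀ (Hₖ₊₁ Pₖ Hₖ₊₁ᵀ + Nₖ₊₁)⁻¹. Then for every k ≥ 1, Pₖ is symmetric positive definite and Pₖ = (Σⱼ₌₁ᵏ Aⱼ)⁻¹. In particular, in the attitude filtering problem where at time t_k the stacked observation matrix is Hₖ = [Hₖ⁰; Hₖ¹] with Hₖ⁰ = (dₖ⁰)ₓ, Hₖ¹ = (dₖ¹)ₓ and Nₖ = diag((σₖ⁰)² I₃, (σₖ¹)² I₃), the covariance returned by the Invariant EKF after n updates is Pₙ = ( Σₖ₌₁ⁿ [ (1/(σₖ⁰)²) Hₖ⁰ᵀ Hₖ⁰ + (1/(σₖ¹)²)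 Hₖ¹ᵀ Hₖ¹ ] )⁻¹, which equals the inverse of the intrinsic Fisher information matrix Jₙ of the filtering problem. -/
open Matrix Finset

/-- The IEKF covariance recursion (indices shifted so that `iekfP H N 0` is the covariance `P₁`
after the first measurement): `P₁ = (H₁ᵀ N₁⁻¹ H₁)⁻¹` and
`Pₖ₊₁ = (I − Kₖ₊₁ Hₖ₊₁) Pₖ` with `Kₖ₊₁ = Pₖ Hₖ₊₁ᵀ (Hₖ₊₁ Pₖ Hₖ₊₁ᵀ + Nₖ₊₁)⁻¹`. -/
noncomputable def iekfP {m n : Type*} [Fintype m] [Fintype n] [DecidableEq m] [DecidableEq n]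
    (H : ℕ → Matrix m n ℝ) (N : ℕ → Matrix m m ℝ) : ℕ → Matrix n n ℝ
  | 0 => ((H 0)ᵀ * (N 0)⁻¹ * H 0)⁻¹
  | (k + 1) =>
      (1 - iekfP H N k * (H (k + 1))ᵀ *
          (H (k + 1) * iekfP H N k * (H (k + 1))ᵀ + N (k + 1))⁻¹ * H (k + 1)) * iekfP H N k

theorem iekf_general_aux {m n : Type*} [Fintype m] [Fintype n] [DecidableEq m] [DecidableEq n]
    (H : ℕ → Matrix m n ℝ) (N : ℕ → Matrix m m ℝ)
    (hN : ∀ k, (N k).PosDef) (h0 : ((H 0)ᵀ * (N 0)⁻¹ * H 0).PosDef) (k : ℕ) :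
    (∑ j ∈ Finset.range (k + 1), (H j)ᵀ * (N j)⁻¹ * H j).PosDef ∧
      iekfP H N k = (∑ j ∈ Finset.range (k + 1), (H j)ᵀ * (N j)⁻¹ * H j)⁻¹ := by
  induction k with
  | zero => simpa [iekfP] using h0
  | succ k ih =>
    obtain ⟨hS, hP⟩ := ih
    rw [Finset.sum_range_succ]
    generalize (∑ j ∈ Finset.range (k + 1), (H j)ᵀ * (N j)⁻¹ * H j) = S at hS hP
    have hA : ((H (k+1))ᵀ * (N (k+1))⁻¹ * H (k+1)).PosSemidef := by
      have := (hN (k+1)).inv.posSemidef.conjTranspose_mul_mul_same (H (k+1))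
      simpa [Matrix.conjTranspose_eq_transpose_of_trivial] using this
    refine ⟨hS.add_posSemidef hA, ?_⟩
    have hB : (N (k+1) + H (k+1) * S⁻¹ * (H (k+1))ᵀ).PosDef := by
      have := hS.inv.posSemidef.mul_mul_conjTranspose_same (H (k+1))
      rw [Matrix.conjTranspose_eq_transpose_of_trivial] at this
      exact (hN (k+1)).add_posSemidef this
    have hNN : (N (k+1))⁻¹⁻¹ = N (k+1) :=
      Matrix.nonsing_inv_nonsing_inv _ ((Matrix.isUnit_iff_isUnit_det _).1 (hN (k+1)).isUnit)
    rw [Matrix.add_mul_mul_inv_eq_sub _ _ _ _ hS.isUnit (hN (k+1)).inv.isUnit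
      (by rw [hNN]; exact hB.isUnit), hNN]
    rw [iekfP, hP, Matrix.sub_mul, Matrix.one_mul, add_comm (N (k+1))]

/-- (general part) the IEKF covariance recursion with `Aₖ = Hₖᵀ Nₖ⁻¹ Hₖ`
(`Nₖ` positive definite, `A₁` positive definite) yields symmetric positive definite matrices
`Pₖ = (Σⱼ₌₁ᵏ Aⱼ)⁻¹`; (particular part) for the attitude filtering problem with stacked
observation matrices `Hₖ = [(dₖ⁰)ₓ; (dₖ¹)ₓ]` and noise covariance
`Nₖ = diag((σₖ⁰)² I₃, (σₖ¹)² I₃)`, the IEKF covariance after `n` updates is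
`Pₙ = (Σₖ [(1/(σₖ⁰)²) Hₖ⁰ᵀ Hₖ⁰ + (1/(σₖ¹)²) Hₖ¹ᵀ Hₖ¹])⁻¹`, the inverse of the intrinsic
Fisher information matrix. -/
theorem iekf_covariance_is_inverse_fisher :
    (∀ (m n : ℕ), 1 ≤ m → 1 ≤ n →
      ∀ (H : ℕ → Matrix (Fin m) (Fin n) ℝ) (N : ℕ → Matrix (Fin m) (Fin m) ℝ),
        (∀ k, (N k).PosDef) → ((H 0)ᵀ * (N 0)⁻¹ * H 0).PosDef →
        ∀ k, (iekfP H N k).PosDef ∧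
          iekfP H N k = (∑ j ∈ Finset.range (k + 1), (H j)ᵀ * (N j)⁻¹ * H j)⁻¹) ∧
    (∀ (d0 d1 : ℕ → Fin 3 → ℝ) (σ0 σ1 : ℕ → ℝ), (∀ k, 0 < σ0 k) → (∀ k, 0 < σ1 k) →
      ∀ (H : ℕ → Matrix (Fin 3 ⊕ Fin 3) (Fin 3) ℝ)
        (N : ℕ → Matrix (Fin 3 ⊕ Fin 3) (Fin 3 ⊕ Fin 3) ℝ),
        (∀ k, H k = Matrix.fromRows (hat (d0 k)) (hat (d1 k))) →
        (∀ k, N k = Matrix.fromBlocks ((σ0 k ^ 2) • (1 : Matrix (Fin 3) (Fin 3) ℝ)) 0 0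
          ((σ1 k ^ 2) • (1 : Matrix (Fin 3) (Fin 3) ℝ))) →
        ((H 0)ᵀ * (N 0)⁻¹ * H 0).PosDef →
        ∀ n, iekfP H N n =
          (∑ k ∈ Finset.range (n + 1),
            ((1 / σ0 k ^ 2) • ((hat (d0 k))ᵀ * hat (d0 k)) +
              (1 / σ1 k ^ 2) • ((hat (d1 k))ᵀ * hat (d1 k))))⁻¹) := by
  refine ⟨fun m n _ _ H N hN h0 k => ?_, ?_⟩
  · obtain ⟨hS, hP⟩ := iekf_general_aux H N hN h0 k
    exact ⟨hP ▸ hS.inv, hP⟩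
  · intro d0 d1 σ0 σ1 h0 h1 H N hH hN hpos n
    have hdiag : ∀ k, N k = Matrix.diagonal
        (Sum.elim (fun _ : Fin 3 => σ0 k ^ 2) (fun _ : Fin 3 => σ1 k ^ 2)) := by
      intro k
      rw [hN k, Matrix.smul_one_eq_diagonal, Matrix.smul_one_eq_diagonal,
        Matrix.fromBlocks_diagonal]
    have hNpos : ∀ k, (N k).PosDef := by
      intro k
      rw [hdiag k]
      refine Matrix.PosDef.diagonal ?_
      rintro (i | i)
      · exact pow_pos (h0 k) 2
      · exact pow_pos (h1 k) 2
    rw [(iekf_general_aux H N hNpos hpos n).2]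
    congr 1
    refine Finset.sum_congr rfl fun k _ => ?_
    have hinv : (N k)⁻¹ = Matrix.fromBlocks
        ((1 / σ0 k ^ 2) • (1 : Matrix (Fin 3) (Fin 3) ℝ)) 0 0
        ((1 / σ1 k ^ 2) • (1 : Matrix (Fin 3) (Fin 3) ℝ)) := by
      apply Matrix.inv_eq_right_inv
      have a0 := (h0 k).ne'
      have a1 := (h1 k).ne'
      rw [hN k, Matrix.fromBlocks_multiply]
      simp [smul_smul, a0, a1]
    rw [hinv, hH k, Matrix.transpose_fromRows, Matrix.fromCols_mul_fromBlocks,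
      Matrix.fromCols_mul_fromRows]
    simp
end
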